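/- For each k ∈ {0,1} and every n ∈ ℕ, the split composite likelihood ratio statistic evaluated at the true parameter has expectation at most one: E_{θ*}[U_{α,β,n}^k(θ*)] ≤ 1. -/

import Mathlib

open MeasureTheory ENNReal
open scoped BigOperators Classical

noncomputable section

/-- Division in `ℝ≥0∞` with the convention that the ratio is `0` when the
denominator is `0`. -/
def safeDiv (a b : ℝ≥0∞) : ℝ≥0∞ := if b = 0 then 0 else a / b

variable {d : ℕ} {π : Fin d → Type*} [∀ i, MeasurableSpace (π i)]

/-- The marginal density on the coordinates in `S`, obtained by integrating a density
out over the coordinates in `[d] \ S` (as a function of the full vector, depending only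
on the coordinates in `S`). -/
def marginal (μ : ∀ i, Measure (π i)) (S : Finset (Fin d))
    (f : (∀ i, π i) → ℝ≥0∞) : (∀ i, π i) → ℝ≥0∞ :=
  MeasureTheory.lmarginal μ Sᶜ f

/-- The conditional density of the coordinates in `T1` given the coordinates in `T2`,
with the convention that the ratio is `0` when the denominator is `0`. -/
def condDens (μ : ∀ i, Measure (π i)) (T1 T2 : Finset (Fin d))
    (f : (∀ i, π i) → ℝ≥0∞) (x : ∀ i, π i) : ℝ≥0∞ :=
  safeDiv (marginal μ (T1 ∪ T2) f x) (marginal μ T2 f x)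

/-- `𝕊_d`: the nonempty subsets of `[d]`. -/
abbrev Sd (d : ℕ) := {S : Finset (Fin d) // S.Nonempty}

/-- `𝕋_d`: ordered pairs of disjoint nonempty subsets of `[d]`. -/
abbrev Td (d : ℕ) := {T : Finset (Fin d) × Finset (Fin d) //
  T.1.Nonempty ∧ T.2.Nonempty ∧ Disjoint T.1 T.2}

/-- The individual composite likelihood
`p_{α,β}(x;θ) = ∏_S p_S(x_S;θ)^(α_S/γ) ∏_T p(x_{T←}|x_{T→};θ)^(β_T/γ)`,
where `f = p(·;θ)` is the joint density. -/
def compLik (μ : ∀ i, Measure (π i)) (α : Sd d → ℝ) (β : Td d → ℝ) (γ : ℝ)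
    (f : (∀ i, π i) → ℝ≥0∞) (x : ∀ i, π i) : ℝ≥0∞ :=
  (∏ S : Sd d, marginal μ S.1 f x ^ (α S / γ)) *
  (∏ T : Td d, condDens μ T.1.1 T.1.2 f x ^ (β T / γ))



lemma safeDiv_measurable : Measurable (fun q : ℝ≥0∞ × ℝ≥0∞ => safeDiv q.1 q.2) := by
  unfold safeDiv
  exact Measurable.ite (measurable_snd (measurableSet_singleton 0)) measurable_const
    (measurable_fst.div measurable_snd)

lemma safeDiv_meas {A : Type*} [MeasurableSpace A] {f g : A → ℝ≥0∞} (hf : Measurable f)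
    (hg : Measurable g) : Measurable (fun a => safeDiv (f a) (g a)) :=
  safeDiv_measurable.comp (hf.prodMk hg)

lemma safeDiv_mul_le (a b : ℝ≥0∞) : safeDiv a b * b ≤ a := by
  unfold safeDiv
  split_ifs with h
  · simp
  · rw [div_eq_mul_inv, mul_assoc]
    exact mul_le_of_le_one_right' (ENNReal.inv_mul_le_one b)

lemma safeDiv_mul_mul (a b c e : ℝ≥0∞) :
    safeDiv (a * b) (c * e) = safeDiv a c * safeDiv b e := by
  unfold safeDiv
  by_cases hc : c = 0
  · simp [hc]
  by_cases he : e = 0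
  · simp [he]
  simp only [hc, he, mul_eq_zero, or_self, if_false, div_eq_mul_inv]
  rw [ENNReal.mul_inv (Or.inl hc) (Or.inr he)]
  ring

lemma safeDiv_prod {ι : Type*} (s : Finset ι) (f g : ι → ℝ≥0∞) :
    safeDiv (∏ i ∈ s, f i) (∏ i ∈ s, g i) = ∏ i ∈ s, safeDiv (f i) (g i) := by
  induction s using Finset.cons_induction with
  | empty => simp [safeDiv]
  | cons a s ha ih => simp only [Finset.prod_cons, safeDiv_mul_mul, ih]

lemma safeDiv_rpow (a b : ℝ≥0∞) {r : ℝ} (hr : 0 ≤ r) :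
    safeDiv (a ^ r) (b ^ r) = safeDiv a b ^ r := by
  rcases hr.eq_or_lt with rfl | hr'
  · simp [safeDiv]
  · unfold safeDiv
    by_cases hb : b = 0
    · simp [hb, hr']
    · rw [if_neg hb, if_neg, ENNReal.div_rpow_of_nonneg _ _ hr]
      simp [ENNReal.rpow_eq_zero_iff, hb, hr'.le]

lemma safeDiv_cond_le (c hA hB : ℝ≥0∞) : safeDiv c (safeDiv hA hB) * hA ≤ c * hB := by
  by_cases h0 : hB = 0
  · simp [safeDiv, h0]
  by_cases ht : hB = ∞
  · simp [safeDiv, ht]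
  have h : hA = safeDiv hA hB * hB := by
    rw [safeDiv, if_neg h0, ENNReal.div_mul_cancel h0 ht]
  calc safeDiv c (safeDiv hA hB) * hA
      = safeDiv c (safeDiv hA hB) * safeDiv hA hB * hB := by
        conv_lhs => rw [h]
        rw [← h, mul_assoc, ← h]
    _ ≤ c * hB := by gcongr; exact safeDiv_mul_le _ _

lemma lmarginal_mul_of_indep (μ : ∀ i, Measure (π i)) (s : Finset (Fin d))
    {f g : (∀ i, π i) → ℝ≥0∞} (hf : Measurable f)
    (hg : ∀ x y, (∀ i ∉ s, x i = y i) → g x = g y) :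
    lmarginal μ s (fun x => g x * f x) = fun x => g x * lmarginal μ s f x := by
  funext x
  unfold lmarginal
  rw [← lintegral_const_mul]
  · refine lintegral_congr fun y => ?_
    change g _ * f _ = _
    rw [hg (Function.updateFinset x s y) x]
    intro i hi
    simp [Function.updateFinset, hi]
  · exact hf.comp measurable_updateFinset

lemma marginal_congr' (μ : ∀ i, Measure (π i)) (S : Finset (Fin d))
    (f : (∀ i, π i) → ℝ≥0∞) {x y : ∀ i, π i} (h : ∀ i ∈ S, x i = y i) :
    marginal μ S f x = marginal μ S f y :=
  lmarginal_congr μ f (fun i hi => h i (by simpa using hi))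

lemma lintegral_eq_marg (μ : ∀ i, Measure (π i)) [∀ i, SigmaFinite (μ i)] (S : Finset (Fin d))
    {f : (∀ i, π i) → ℝ≥0∞} (hf : Measurable f) (x : ∀ i, π i) :
    ∫⁻ x, f x ∂(Measure.pi μ) = lmarginal μ S (marginal μ S f) x := by
  rw [lintegral_eq_lmarginal_univ x, marginal, ← lmarginal_union μ f hf disjoint_compl_right,
    Finset.union_compl]

lemma marg_meas (μ : ∀ i, Measure (π i)) [∀ i, SigmaFinite (μ i)] (S : Finset (Fin d))
    {f : (∀ i, π i) → ℝ≥0∞} (hf : Measurable f) : Measurable (marginal μ S f) :=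
  hf.lmarginal μ

lemma condDens_meas (μ : ∀ i, Measure (π i)) [∀ i, SigmaFinite (μ i)] (S T : Finset (Fin d))
    {f : (∀ i, π i) → ℝ≥0∞} (hf : Measurable f) : Measurable (condDens μ S T f) :=
  safeDiv_meas (marg_meas μ _ hf) (marg_meas μ _ hf)

lemma marg_ratio_le (μ : ∀ i, Measure (π i)) [∀ i, SigmaFinite (μ i)] (S : Finset (Fin d))
    {f h : (∀ i, π i) → ℝ≥0∞} (hf : Measurable f) (hh : Measurable h)
    (hf1 : ∫⁻ x, f x ∂(Measure.pi μ) = 1) :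
    ∫⁻ x, safeDiv (marginal μ S f x) (marginal μ S h x) * h x ∂(Measure.pi μ) ≤ 1 := by
  rcases isEmpty_or_nonempty (∀ i, π i) with he | ⟨⟨x⟩⟩
  · simp [lintegral_of_isEmpty]
  have hm : Measurable fun x => safeDiv (marginal μ S f x) (marginal μ S h x) :=
    safeDiv_meas (marg_meas μ _ hf) (marg_meas μ _ hh)
  have hmm : Measurable fun x => safeDiv (marginal μ S f x) (marginal μ S h x) * h x := hm.mul hh
  rw [lintegral_eq_marg μ S hmm x, ← hf1, lintegral_eq_marg μ S hf x]
  refine lmarginal_mono (fun z => ?_) x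
  have := lmarginal_mul_of_indep μ Sᶜ (g := fun x => safeDiv (marginal μ S f x) (marginal μ S h x))
    hh (fun x y hxy => by
      have hxy' : ∀ i ∈ S, x i = y i := fun i hi => hxy i (by simpa using hi)
      simp only [marginal_congr' μ S _ hxy'])
  refine (congrFun this z).trans_le ?_
  exact safeDiv_mul_le _ _

lemma cond_ratio_le (μ : ∀ i, Measure (π i)) [∀ i, SigmaFinite (μ i)] (T1 T2 : Finset (Fin d))
    (hT : Disjoint T1 T2)
    {f h : (∀ i, π i) → ℝ≥0∞} (hf : Measurable f) (hh : Measurable h)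
    (hh1 : ∫⁻ x, h x ∂(Measure.pi μ) = 1) :
    ∫⁻ x, safeDiv (condDens μ T1 T2 f x) (condDens μ T1 T2 h x) * h x ∂(Measure.pi μ) ≤ 1 := by
  rcases isEmpty_or_nonempty (∀ i, π i) with he | ⟨⟨x⟩⟩
  · simp [lintegral_of_isEmpty]
  have hm : Measurable fun x => safeDiv (condDens μ T1 T2 f x) (condDens μ T1 T2 h x) :=
    safeDiv_meas (condDens_meas μ _ _ hf) (condDens_meas μ _ _ hh)
  have hB := marg_meas μ T2 hh
  have hA := marg_meas μ (T1 ∪ T2) hf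
  have hc := condDens_meas μ T1 T2 hf
  have key : lmarginal μ T1 (marginal μ (T1 ∪ T2) f) = marginal μ T2 f := by
    unfold marginal
    rw [← lmarginal_union μ f hf]
    · congr 1
      ext i
      have : i ∈ T1 → i ∉ T2 := fun h1 => Finset.disjoint_left.mp hT h1
      simp only [Finset.mem_union, Finset.mem_compl]
      tauto
    · rw [Finset.disjoint_left]
      intro i hi
      simp [hi]
  have hnT : ∀ x y : (∀ i, π i), (∀ i ∉ T1, x i = y i) → ∀ i ∈ T2, x i = y i :=
    fun x y hxy i hi => hxy i (Finset.disjoint_right.mp hT hi)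
  have hmm : Measurable fun x =>
      safeDiv (condDens μ T1 T2 f x) (condDens μ T1 T2 h x) * h x := hm.mul hh
  rw [lintegral_eq_marg μ (T1 ∪ T2) hmm x]
  calc lmarginal μ (T1 ∪ T2) (marginal μ (T1 ∪ T2) (fun x =>
          safeDiv (condDens μ T1 T2 f x) (condDens μ T1 T2 h x) * h x)) x
      ≤ lmarginal μ (T1 ∪ T2) (fun z => marginal μ T2 h z * condDens μ T1 T2 f z) x := by
        refine lmarginal_mono (fun z => ?_) x
        have := lmarginal_mul_of_indep μ (T1 ∪ T2)ᶜ
          (g := fun x => safeDiv (condDens μ T1 T2 f x) (condDens μ T1 T2 h x))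
          hh (fun x y hxy => by
            have h1 : ∀ i ∈ T1 ∪ T2, x i = y i :=
              fun i hi => hxy i (fun h' => Finset.mem_compl.mp h' hi)
            have h2 : ∀ i ∈ T2, x i = y i :=
              fun i hi => h1 i (Finset.mem_union_right _ hi)
            simp only [condDens, marginal_congr' μ _ _ h1, marginal_congr' μ _ _ h2])
        refine (congrFun this z).trans_le ?_
        rw [mul_comm (marginal μ T2 h z)]
        exact safeDiv_cond_le _ _ _
    _ = lmarginal μ T2 (lmarginal μ T1
          (fun z => marginal μ T2 h z * condDens μ T1 T2 f z)) x := by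
        have hbc : Measurable fun z => marginal μ T2 h z * condDens μ T1 T2 f z := hB.mul hc
        rw [lmarginal_union' μ _ hbc hT]
    _ ≤ lmarginal μ T2 (marginal μ T2 h) x := by
        refine lmarginal_mono (fun z => ?_) x
        rw [lmarginal_mul_of_indep μ T1 hc
          (fun x y hxy => marginal_congr' μ _ _ (hnT x y hxy))]
        have hcd : condDens μ T1 T2 f = fun z =>
            safeDiv 1 (marginal μ T2 f z) * marginal μ (T1 ∪ T2) f z := by
          funext z
          simp only [condDens, safeDiv]
          split_ifs <;> simp [div_eq_mul_inv, mul_comm]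
        rw [hcd, lmarginal_mul_of_indep μ T1 hA
          (fun x y hxy => by rw [marginal_congr' μ _ _ (hnT x y hxy)]), key]
        calc _ ≤ marginal μ T2 h z * 1 := mul_le_mul_right (safeDiv_mul_le _ _) _
          _ = _ := mul_one _
    _ = 1 := by rw [← lintegral_eq_marg μ T2 hh x, hh1]

lemma ratio_eq (μ : ∀ i, Measure (π i)) (α : Sd d → ℝ) (β : Td d → ℝ) (γ : ℝ)
    (hα : ∀ S, 0 ≤ α S) (hβ : ∀ T, 0 ≤ β T) (hγpos : 0 < γ)
    (f h : (∀ i, π i) → ℝ≥0∞) (x : ∀ i, π i) :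
    safeDiv (compLik μ α β γ f x) (compLik μ α β γ h x) =
      (∏ S : Sd d, safeDiv (marginal μ S.1 f x) (marginal μ S.1 h x) ^ (α S / γ)) *
      (∏ T : Td d, safeDiv (condDens μ T.1.1 T.1.2 f x) (condDens μ T.1.1 T.1.2 h x)
        ^ (β T / γ)) := by
  unfold compLik
  rw [safeDiv_mul_mul, safeDiv_prod, safeDiv_prod]
  congr 1
  · exact Finset.prod_congr rfl fun S _ => safeDiv_rpow _ _ (div_nonneg (hα S) hγpos.le)
  · exact Finset.prod_congr rfl fun S _ => safeDiv_rpow _ _ (div_nonneg (hβ S) hγpos.le)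

lemma single_le (μ : ∀ i, Measure (π i)) [∀ i, SigmaFinite (μ i)]
    (α : Sd d → ℝ) (β : Td d → ℝ) (γ : ℝ)
    (hα : ∀ S, 0 ≤ α S) (hβ : ∀ T, 0 ≤ β T)
    (hγ : γ = ∑ S, α S + ∑ T, β T) (hγpos : 0 < γ)
    {f h : (∀ i, π i) → ℝ≥0∞} (hf : Measurable f) (hh : Measurable h)
    (hf1 : ∫⁻ x, f x ∂(Measure.pi μ) = 1) (hh1 : ∫⁻ x, h x ∂(Measure.pi μ) = 1) :
    ∫⁻ x, safeDiv (compLik μ α β γ f x) (compLik μ α β γ h x)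
      ∂((Measure.pi μ).withDensity h) ≤ 1 := by
  simp only [ratio_eq μ α β γ hα hβ hγpos]
  let F : Sd d ⊕ Td d → (∀ i, π i) → ℝ≥0∞ := Sum.elim
    (fun S x => safeDiv (marginal μ S.1 f x) (marginal μ S.1 h x))
    (fun T x => safeDiv (condDens μ T.1.1 T.1.2 f x) (condDens μ T.1.1 T.1.2 h x))
  let w : Sd d ⊕ Td d → ℝ := Sum.elim (fun S => α S / γ) (fun T => β T / γ)
  have hF : ∀ i, Measurable (F i) := by
    rintro (S | T)
    · exact safeDiv_meas (marg_meas μ _ hf) (marg_meas μ _ hh)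
    · exact safeDiv_meas (condDens_meas μ _ _ hf) (condDens_meas μ _ _ hh)
  have hw0 : ∀ i, 0 ≤ w i := by
    rintro (S | T)
    · exact div_nonneg (hα S) hγpos.le
    · exact div_nonneg (hβ T) hγpos.le
  have hw1 : ∑ i, w i = 1 := by
    simp only [w, Fintype.sum_sum_type, Sum.elim_inl, Sum.elim_inr, ← Finset.sum_div]
    rw [← add_div, ← hγ, div_self hγpos.ne']
  have hI : ∀ i, ∫⁻ x, F i x ∂((Measure.pi μ).withDensity h) ≤ 1 := by
    intro i
    rw [lintegral_withDensity_eq_lintegral_mul _ hh (hF i)]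
    simp only [Pi.mul_apply, mul_comm (h _)]
    rcases i with S | T
    · exact marg_ratio_le μ _ hf hh hf1
    · exact cond_ratio_le μ _ _ T.2.2.2 hf hh hh1
  have := ENNReal.lintegral_prod_norm_pow_le (μ := (Measure.pi μ).withDensity h) Finset.univ
    (f := F) (fun i _ => (hF i).aemeasurable) hw1 (fun i _ => hw0 i)
  simp only [Fintype.prod_sum_type, F, w, Sum.elim_inl, Sum.elim_inr] at this
  refine this.trans ?_
  refine mul_le_one' (Finset.prod_le_one' fun S _ => ?_) (Finset.prod_le_one' fun T _ => ?_)
  · exact ENNReal.rpow_le_one (hI (Sum.inl S)) (hw0 (Sum.inl S))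
  · exact ENNReal.rpow_le_one (hI (Sum.inr T)) (hw0 (Sum.inr T))

lemma marg_joint (μ : ∀ i, Measure (π i)) [∀ i, SigmaFinite (μ i)]
    {Θ : Type*} [MeasurableSpace Θ] (p : Θ → (∀ i, π i) → ℝ≥0∞)
    (hp : Measurable (Function.uncurry p)) (S : Finset (Fin d)) :
    Measurable (fun q : Θ × (∀ i, π i) => marginal μ S (p q.1) q.2) := by
  unfold marginal lmarginal
  refine Measurable.lintegral_prod_right' (f := fun r : (Θ × (∀ i, π i)) × _ =>
    p r.1.1 (Function.updateFinset r.1.2 Sᶜ r.2)) ?_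
  exact hp.comp (Measurable.prodMk (measurable_fst.comp measurable_fst)
    (measurable_updateFinset'.comp
      (Measurable.prodMk (measurable_snd.comp measurable_fst) measurable_snd)))

lemma compLik_joint (μ : ∀ i, Measure (π i)) [∀ i, SigmaFinite (μ i)]
    (α : Sd d → ℝ) (β : Td d → ℝ) (γ : ℝ)
    {Θ : Type*} [MeasurableSpace Θ] (p : Θ → (∀ i, π i) → ℝ≥0∞)
    (hp : Measurable (Function.uncurry p)) :
    Measurable (fun q : Θ × (∀ i, π i) => compLik μ α β γ (p q.1) q.2) := by
  unfold compLik
  refine Measurable.mul (Finset.measurable_prod _ fun S _ => ?_)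
    (Finset.measurable_prod _ fun T _ => ?_)
  · exact (marg_joint μ p hp _).pow_const _
  · exact (safeDiv_meas (marg_joint μ p hp _) (marg_joint μ p hp _)).pow_const _

lemma half_abs {E Θ Ω : Type*} [MeasurableSpace E] [MeasurableSpace Θ] [MeasurableSpace Ω]
    (ν : Measure E) [IsProbabilityMeasure ν] (Pr : Measure Ω) (n : ℕ)
    (R : Θ × E → ℝ≥0∞) (hR : Measurable R) (hR1 : ∀ θ, ∫⁻ x, R (θ, x) ∂ν ≤ 1)
    (X0 X1 : Fin n → Ω → E)
    (hX0 : ∀ j, Measurable (X0 j)) (hX1 : ∀ j, Measurable (X1 j))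
    (hlaw : Measure.map (fun ω => (fun j => X0 j ω, fun j => X1 j ω)) Pr
      = (Measure.pi fun _ : Fin n => ν).prod (Measure.pi fun _ : Fin n => ν))
    (t1 : (Fin n → E) → Θ) (ht1 : Measurable t1) :
    (∫⁻ ω, ∏ j : Fin n, R (t1 fun j' => X1 j' ω, X0 j ω) ∂Pr) ≤ 1 := by
  let G : (Fin n → E) × (Fin n → E) → ℝ≥0∞ := fun z => ∏ j : Fin n, R (t1 z.2, z.1 j)
  have hG : Measurable G := by
    refine Finset.measurable_prod _ fun j _ => ?_
    exact hR.comp (Measurable.prodMk (ht1.comp measurable_snd)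
      ((measurable_pi_apply j).comp measurable_fst))
  have hX : Measurable (fun ω => ((fun j => X0 j ω, fun j => X1 j ω) :
      (Fin n → E) × (Fin n → E))) :=
    (measurable_pi_lambda _ hX0).prodMk (measurable_pi_lambda _ hX1)
  have h1 := lintegral_map (μ := Pr) hG hX
  rw [hlaw, lintegral_prod_symm' _ hG] at h1
  refine h1.symm.trans_le ?_
  have hin : ∀ y, ∫⁻ x, G (x, y) ∂(Measure.pi fun _ : Fin n => ν) ≤ 1 := by
    intro y
    have hRy : Measurable (fun x => R (t1 y, x)) := hR.comp measurable_prodMk_left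
    have hind := ProbabilityTheory.iIndepFun_pi
      (μ := fun _ : Fin n => ν)
      (X := fun _ x => R (t1 y, x)) (fun _ => hRy.aemeasurable)
    have := ProbabilityTheory.lintegral_prod_eq_prod_lintegral_of_indepFun Finset.univ _ hind
      (fun i => hRy.comp (measurable_pi_apply i))
    refine this.trans_le (Finset.prod_le_one' fun j _ => ?_)
    rw [(measurePreserving_eval (fun _ : Fin n => ν) j).lintegral_comp hRy]
    exact hR1 _
  calc _ ≤ ∫⁻ _, 1 ∂(Measure.pi fun _ : Fin n => ν) := lintegral_mono hin
    _ = 1 := by simp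

lemma ratio_joint (μ : ∀ i, Measure (π i)) [∀ i, SigmaFinite (μ i)]
    (α : Sd d → ℝ) (β : Td d → ℝ) (γ : ℝ)
    {Θ : Type*} [MeasurableSpace Θ] (p : Θ → (∀ i, π i) → ℝ≥0∞)
    (hp : Measurable (Function.uncurry p)) (θstar : Θ) :
    Measurable (fun q : Θ × (∀ i, π i) =>
      safeDiv (compLik μ α β γ (p q.1) q.2) (compLik μ α β γ (p θstar) q.2)) := by
  have h := compLik_joint μ α β γ p hp
  generalize compLik μ α β γ = c at h ⊢
  have h2 : Measurable fun q : Θ × (∀ i, π i) => (θstar, q.2) :=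
    measurable_const.prodMk measurable_snd
  exact safeDiv_meas h (h.comp h2)

lemma half (μ : ∀ i, Measure (π i)) [∀ i, SigmaFinite (μ i)]
    {Θ : Type*} [MeasurableSpace Θ]
    (p : Θ → (∀ i, π i) → ℝ≥0∞)
    (hp_meas : Measurable (Function.uncurry p))
    (hp_prob : ∀ θ : Θ, ∫⁻ x, p θ x ∂(Measure.pi μ) = 1)
    (α : Sd d → ℝ) (β : Td d → ℝ)
    (hα : ∀ S, 0 ≤ α S) (hβ : ∀ T, 0 ≤ β T)
    (γ : ℝ) (hγ : γ = ∑ S, α S + ∑ T, β T) (hγpos : 0 < γ)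
    {Ω : Type*} [MeasurableSpace Ω]
    (Pr : Measure Ω) (θstar : Θ) (n : ℕ)
    (X0 X1 : Fin n → Ω → (∀ i, π i))
    (hX0 : ∀ j, Measurable (X0 j)) (hX1 : ∀ j, Measurable (X1 j))
    (hlaw : Measure.map (fun ω => (fun j => X0 j ω, fun j => X1 j ω)) Pr
      = (Measure.pi fun _ : Fin n => (Measure.pi μ).withDensity (p θstar)).prod
          (Measure.pi fun _ : Fin n => (Measure.pi μ).withDensity (p θstar)))
    (t1 : (Fin n → ∀ i, π i) → Θ) (ht1 : Measurable t1) :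
    (∫⁻ ω, safeDiv
        (∏ j : Fin n, compLik μ α β γ (p (t1 fun j' => X1 j' ω)) (X0 j ω))
        (∏ j : Fin n, compLik μ α β γ (p θstar) (X0 j ω)) ∂Pr) ≤ 1 := by
  have : IsProbabilityMeasure ((Measure.pi μ).withDensity (p θstar)) :=
    ⟨by rw [withDensity_apply _ MeasurableSet.univ, Measure.restrict_univ, hp_prob]⟩
  have hpm : ∀ θ, Measurable (p θ) := fun θ => hp_meas.of_uncurry_left
  have hR := ratio_joint μ α β γ p hp_meas θstar
  have h1 : ∀ θ, ∫⁻ x, safeDiv (compLik μ α β γ (p θ) x) (compLik μ α β γ (p θstar) x)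
      ∂((Measure.pi μ).withDensity (p θstar)) ≤ 1 := fun θ =>
    single_le μ α β γ hα hβ hγ hγpos (hpm _) (hpm _) (hp_prob _) (hp_prob _)
  simp only [safeDiv_prod]
  generalize compLik μ α β γ = c at hR h1 ⊢
  exact half_abs ((Measure.pi μ).withDensity (p θstar)) Pr n
    (fun q => safeDiv (c (p q.1) q.2) (c (p θstar) q.2)) hR h1
    X0 X1 hX0 hX1 hlaw t1 ht1

/-- For each `k ∈ {0,1}` and every `n ∈ ℕ`, the split composite
likelihood ratio statistic evaluated at the true parameter has expectation at most
one: `E_{θ*}[U_{α,β,n}^k(θ*)] ≤ 1`. -/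
theorem split_CLRS_expectation_le_one
    {d : ℕ} (hd : 1 ≤ d)
    {π : Fin d → Type*} [∀ i, MeasurableSpace (π i)]
    (μ : ∀ i, Measure (π i)) [∀ i, SigmaFinite (μ i)]
    {Θ : Type*} [MeasurableSpace Θ]
    (p : Θ → (∀ i, π i) → ℝ≥0∞)
    (hp_meas : Measurable (Function.uncurry p))
    (hp_prob : ∀ θ : Θ, ∫⁻ x, p θ x ∂(Measure.pi μ) = 1)
    (α : Sd d → ℝ) (β : Td d → ℝ)
    (hα : ∀ S, 0 ≤ α S) (hβ : ∀ T, 0 ≤ β T)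
    (γ : ℝ) (hγ : γ = ∑ S, α S + ∑ T, β T) (hγpos : 0 < γ)
    {Ω : Type*} [MeasurableSpace Ω]
    (Pr : Measure Ω) [IsProbabilityMeasure Pr]
    (θstar : Θ) (n : ℕ)
    -- the two halves `X_n^0` and `X_n^1` of the i.i.d. sample of size `2n`
    (X0 X1 : Fin n → Ω → (∀ i, π i))
    (hX0 : ∀ j, Measurable (X0 j)) (hX1 : ∀ j, Measurable (X1 j))
    -- the `2n` observations are i.i.d. with density `p(·;θ*)` w.r.t. `μ`
    (hlaw : Measure.map (fun ω => (fun j => X0 j ω, fun j => X1 j ω)) Pr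
      = (Measure.pi fun _ : Fin n => (Measure.pi μ).withDensity (p θstar)).prod
          (Measure.pi fun _ : Fin n => (Measure.pi μ).withDensity (p θstar)))
    -- the estimators `θ̃_n^0`, `θ̃_n^1` are measurable functions of `X_n^0`, `X_n^1` alone
    (t0 t1 : (Fin n → ∀ i, π i) → Θ)
    (ht0 : Measurable t0) (ht1 : Measurable t1) :
    -- `E_{θ*}[U_{α,β,n}^0(θ*)] ≤ 1`
    (∫⁻ ω, safeDiv
        (∏ j : Fin n, compLik μ α β γ (p (t1 fun j' => X1 j' ω)) (X0 j ω))
        (∏ j : Fin n, compLik μ α β γ (p θstar) (X0 j ω)) ∂Pr) ≤ 1 ∧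
    -- `E_{θ*}[U_{α,β,n}^1(θ*)] ≤ 1`
    (∫⁻ ω, safeDiv
        (∏ j : Fin n, compLik μ α β γ (p (t0 fun j' => X0 j' ω)) (X1 j ω))
        (∏ j : Fin n, compLik μ α β γ (p θstar) (X1 j ω)) ∂Pr) ≤ 1 := by
  refine ⟨half μ p hp_meas hp_prob α β hα hβ γ hγ hγpos Pr θstar n X0 X1 hX0 hX1 hlaw t1 ht1,
    half μ p hp_meas hp_prob α β hα hβ γ hγ hγpos Pr θstar n X1 X0 hX1 hX0 ?_ t0 ht0⟩
  have : IsProbabilityMeasure ((Measure.pi μ).withDensity (p θstar)) :=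
    ⟨by rw [withDensity_apply _ MeasurableSet.univ, Measure.restrict_univ, hp_prob]⟩
  have hX : Measurable (fun ω => ((fun j => X0 j ω, fun j => X1 j ω) :
      (Fin n → ∀ i, π i) × (Fin n → ∀ i, π i))) :=
    (measurable_pi_lambda _ hX0).prodMk (measurable_pi_lambda _ hX1)
  have h := congrArg (Measure.map Prod.swap) hlaw
  rw [Measure.prod_swap, Measure.map_map measurable_swap hX] at h
  exact h
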